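/- Let B ⊆ A be an inclusion of simple unital C*-algebras with common unit admitting a finite-index conditional expectation, let E₀ : A → B be the minimal conditional expectation, and let C := C*(B ∪ C_A(B)). Then C belongs to IMS(B, A, E₀): there exists a conditional expectation F : A → C such that (E₀|_C) ∘ F = E₀, and moreover F has finite index. -/

import Mathlib

/-!
Write `D` for the relative commutant of `B` in `A`, and `l` for a quasi-basis of `E₀`. Simplicity
makes centres trivial, so on `D` both `E₀` and the index functional
`d ↦ ∑ i, l i * d * star (l i)` are scalar valued.

The decisive fact is that `D` centralizes the minimal expectation: `E₀ (d * x) = E₀ (x * d)` for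
`d ∈ D` and all `x`. Every invertible `k ∈ D` gives another finite-index expectation, a multiple of
`x ↦ E₀ (star k * x * k)`, whose index is bounded below by minimality. Differentiating this bound
along `k = exp (t • a)` with `a ∈ D` self-adjoint shows that the index functional is a multiple of
`E₀` on `D`. Now `E₀ (d * x) = E₀ (x * s)` for some `s ∈ D`, and moving `d` through the quasi-basis
expansion shows that the index functional takes the same value at `x * d` and at `s * x`. Hence
`y = s - d` satisfies `E₀ (y * star y) = -E₀ (star y * y)`, and faithfulness gives `y = 0`.

For the inner product `E₀ (star x * y)` on `D`, Bessel's inequality bounds the size of orthonormal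
families by the index, so `D` is finite dimensional and has an orthonormal basis, which after taking
adjoints is a quasi-basis `d` of `E₀` restricted to `D`. The expectation sought is the orthogonal
projection `F x = ∑ j, E₀ (x * d j) * star (d j)`. The orthogonal complement of `D` is self-adjoint
and a bimodule over `B` and, by centrality, over `D`, hence over `C`. So `x - F x` is orthogonal to
`C`, which characterizes `F x ∈ C` and makes `F` a `C`-bimodule map preserving adjoints, with
`E₀ (F x) = E₀ x`. Compressing `F (star x * x)` by its negative part shows that `F` is positive.
Finally `z = ∑ j, star (d j) * d j` is central in `D` and `1 ≤ z`, and the elements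
`l i * z ^ (-1/2)` form a quasi-basis of `F`.
-/

namespace RegularInclusion

variable {A : Type*} [NormedRing A] [StarRing A] [CStarRing A] [CompleteSpace A]
  [NormedAlgebra ℂ A] [StarModule ℂ A]

/-- A conditional expectation of `A` onto the subset `B`: a `ℂ`-linear positive
`B`-bimodular projection of `A` onto `B`. -/
def IsCondExp (B : Set A) (E : A →ₗ[ℂ] A) : Prop :=
  (∀ x, E x ∈ B) ∧ (∀ b ∈ B, E b = b) ∧
  (∀ x, ∃ y, E (star x * x) = star y * y) ∧
  (∀ b₁ ∈ B, ∀ b₂ ∈ B, ∀ x, E (b₁ * x * b₂) = b₁ * E x * b₂)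

/-- `l` is a right quasi-basis for `E`, witnessing finite index. -/
def IsRightQB (E : A →ₗ[ℂ] A) {n : ℕ} (l : Fin n → A) : Prop :=
  ∀ x, x = ∑ i, E (x * l i) * star (l i)

/-- The centralizer (relative commutant) `C_A(B)` of `B` in `A`. -/
def cent (B : Set A) : Set A := {x | ∀ b ∈ B, x * b = b * x}

/-- The normalizer `N_A(B) = {u ∈ U(A) : uBu* = B}` of `B` in `A`. -/
def normalizer (B : Set A) : Set A :=
  {u | u ∈ unitary A ∧ (fun x => u * x * star u) '' B = B}

/-- The set `U(B)` of unitaries of `B`. -/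
def UB (B : Set A) : Set A := {b | b ∈ B ∧ b ∈ unitary A}

/-- The set `U(B)·U(C_A(B))` of products of a unitary of `B` and a unitary of
the centralizer of `B`. -/
def UBC (B : Set A) : Set A :=
  {x | ∃ b c, b ∈ B ∧ b ∈ unitary A ∧ c ∈ cent B ∧ c ∈ unitary A ∧ x = b * c}

/-- Simplicity of the C*-algebra (given as the subset `S` of `A`): the only closed
two-sided ideals of `S` are `{0}` and `S`. -/
def IsSimpleCStar (S : Set A) : Prop :=
  ∀ I : Set A, I ⊆ S → IsClosed I → (0 : A) ∈ I →
    (∀ x ∈ I, ∀ y ∈ I, x + y ∈ I) →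
    (∀ x ∈ I, ∀ b ∈ S, x * b ∈ I ∧ b * x ∈ I) →
    I = {0} ∨ I = S

/-- The intermediate C*-subalgebra `C := C*(B ∪ C_A(B))` generated by `B` and the
centralizer of `B`. -/
def genC (B : Set A) : StarSubalgebra ℂ A :=
  (StarAlgebra.adjoin ℂ (B ∪ cent B)).topologicalClosure

/-- Regularity of the inclusion `B ⊆ A`: the normalizer of `B` generates `A` as a
C*-algebra. -/
def IsRegular (B : Set A) : Prop :=
  (StarAlgebra.adjoin ℂ (normalizer B)).topologicalClosure = ⊤

/-- `E₀` is the minimal conditional expectation of `A` onto `B`: the finite-index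
conditional expectation whose (scalar) Watatani index is least among all finite-index
conditional expectations onto `B`. -/
def IsMinimalCondExp (B : Set A) (E₀ : A →ₗ[ℂ] A) : Prop :=
  IsCondExp B E₀ ∧
  ∃ (r₀ : ℝ) (n : ℕ) (l : Fin n → A), IsRightQB E₀ l ∧
    (∑ i, l i * star (l i)) = (r₀ : ℂ) • 1 ∧
    ∀ E : A →ₗ[ℂ] A, IsCondExp B E → ∀ (m : ℕ) (μ : Fin m → A), IsRightQB E μ →
      ∀ r : ℝ, (∑ i, μ i * star (μ i)) = (r : ℂ) • 1 → r₀ ≤ r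

section Center

/-- For `c` in the spectrum of a central element `z`, the closed ideal generated by `z - c` is
proper, because the units of a Banach algebra form an open set. -/
lemma isCentral_of_forall_isClosed_ideal {R : Type*} [NormedRing R] [NormedAlgebra ℂ R]
    [CompleteSpace R]
    (h : ∀ I : Ideal R, I.IsTwoSided → IsClosed (I : Set R) → I = ⊥ ∨ I = ⊤) :
    Algebra.IsCentral ℂ R where
  out := fun z hz => by
    rcases subsingleton_or_nontrivial R with hR | hR
    · exact ⟨0, Subsingleton.elim _ _⟩
    obtain ⟨c, hc⟩ := spectrum.nonempty z
    set w : R := algebraMap ℂ R c - z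
    have hw : ∀ x, Commute w x := fun x =>
      (Algebra.commute_algebraMap_left c x).sub_left (Subalgebra.mem_center_iff.mp hz x).symm
    have hproper : Ideal.span {w} ≠ ⊤ := fun htop => hc <| by
      obtain ⟨a, ha⟩ := Ideal.mem_span_singleton'.mp ((Ideal.eq_top_iff_one _).mp htop)
      exact isUnit_iff_exists.mpr ⟨a, (hw a).eq.trans ha, ha⟩
    have htwo : (Ideal.span {w}).closure.IsTwoSided :=
      ⟨fun {x} y hx => map_mem_closure (f := (· * y)) (by fun_prop) hx fun u hu => by
        obtain ⟨a, rfl⟩ := Ideal.mem_span_singleton'.mp hu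
        exact Ideal.mem_span_singleton'.mpr ⟨a * y, by simp only [mul_assoc, (hw y).eq]⟩⟩
    have hbot := (h _ htwo isClosed_closure).resolve_right (Ideal.closure_ne_top _ hproper)
    have hw0 : w ∈ (Ideal.span {w}).closure :=
      subset_closure (Ideal.subset_span (Set.mem_singleton w))
    rw [hbot, Ideal.mem_bot] at hw0
    exact ⟨c, sub_eq_zero.mp hw0⟩

lemma IsSimpleCStar.isCentral {M : Type*} [CStarAlgebra M] {S : StarSubalgebra ℂ M}
    (hclosed : IsClosed (S : Set M)) (hS : IsSimpleCStar (S : Set M)) : Algebra.IsCentral ℂ S := by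
  have : CompleteSpace S := hclosed.completeSpace_coe
  refine isCentral_of_forall_isClosed_ideal fun I hI hIclosed => ?_
  have hcases := hS (Subtype.val '' (I : Set S)) (Subtype.coe_image_subset _ _)
    (hclosed.isClosedEmbedding_subtypeVal.isClosedMap _ hIclosed) ⟨0, I.zero_mem, rfl⟩
    (by rintro _ ⟨x, hx, rfl⟩ _ ⟨y, hy, rfl⟩; exact ⟨x + y, I.add_mem hx hy, rfl⟩)
    (by
      rintro _ ⟨x, hx, rfl⟩ b hb
      exact ⟨⟨x * ⟨b, hb⟩, I.mul_mem_right _ hx, rfl⟩, ⟨⟨b, hb⟩ * x, I.mul_mem_left _ hx, rfl⟩⟩)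
  refine hcases.imp (fun h => ?_) (fun h => ?_)
  · refine (Submodule.eq_bot_iff _).mpr fun x hx => Subtype.val_injective ?_
    exact h.subset ⟨x, hx, rfl⟩
  · obtain ⟨x, hx, hx1⟩ := h.superset (one_mem S)
    rwa [Ideal.eq_top_iff_one, ← Subtype.val_injective (a₁ := x) (a₂ := 1) hx1]

lemma IsSimpleCStar.isCentral_univ {M : Type*} [CStarAlgebra M]
    (hM : IsSimpleCStar (Set.univ : Set M)) : Algebra.IsCentral ℂ M :=
  isCentral_of_forall_isClosed_ideal fun I _ hclosed =>
    (hM I (Set.subset_univ _) hclosed I.zero_mem (fun _ hx _ hy => I.add_mem hx hy)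
      fun _ hx b _ => ⟨I.mul_mem_right b hx, I.mul_mem_left b hx⟩).imp
      (SetLike.coe_injective ·) (SetLike.coe_injective ·)

end Center

section CondExp

variable {M : Type*} [CStarAlgebra M] {B : StarSubalgebra ℂ M} {E : M →ₗ[ℂ] M} {n : ℕ}
  {l : Fin n → M}

/-- The relative commutant of `B` as a star subalgebra; its underlying set is `cent B`. -/
def relCommutant (B : StarSubalgebra ℂ M) : StarSubalgebra ℂ M :=
  StarSubalgebra.centralizer ℂ (B : Set M)

lemma mem_relCommutant {x : M} : x ∈ relCommutant B ↔ ∀ b ∈ B, x * b = b * x := by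
  rw [relCommutant, StarSubalgebra.mem_centralizer_iff]
  exact ⟨fun h b hb => (h b hb).1.symm,
    fun h b hb => ⟨(h b hb).symm, (h _ (star_mem hb)).symm⟩⟩

lemma relCommutant_le_genC : relCommutant B ≤ genC (B : Set M) := fun _ hx =>
  StarSubalgebra.le_topologicalClosure _
    (StarAlgebra.subset_adjoin ℂ _ (.inr (mem_relCommutant.mp hx)))

lemma le_genC : B ≤ genC (B : Set M) := fun _ hx =>
  StarSubalgebra.le_topologicalClosure _ (StarAlgebra.subset_adjoin ℂ _ (.inl hx))

namespace IsCondExp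

protected lemma map_mul_left (hE : IsCondExp (B : Set M) E) {b : M} (hb : b ∈ B) (x : M) :
    E (b * x) = b * E x := by
  simpa using hE.2.2.2 b hb 1 (one_mem B) x

protected lemma map_mul_right (hE : IsCondExp (B : Set M) E) {b : M} (hb : b ∈ B) (x : M) :
    E (x * b) = E x * b := by
  simpa using hE.2.2.2 1 (one_mem B) b hb x

protected lemma map_one (hE : IsCondExp (B : Set M) E) : E 1 = 1 :=
  hE.2.1 1 (one_mem B)

lemma commute_relCommutant (hE : IsCondExp (B : Set M) E) (x : M) {d : M}
    (hd : d ∈ relCommutant B) : Commute (E x) d :=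
  (mem_relCommutant.mp hd _ (hE.1 x)).symm

lemma exists_eq_smul_one [Algebra.IsCentral ℂ B] (hE : IsCondExp (B : Set M) E) {d : M}
    (hd : d ∈ relCommutant B) : ∃ c : ℂ, E d = c • (1 : M) := by
  have hcenter : (⟨E d, hE.1 d⟩ : B) ∈ Subalgebra.center ℂ B :=
    Subalgebra.mem_center_iff.mpr fun b => Subtype.ext <| by
      change b * E d = E d * b
      rw [← hE.map_mul_left b.2, ← hE.map_mul_right b.2, mem_relCommutant.mp hd b b.2]
  obtain ⟨c, hc⟩ := (Algebra.IsCentral.mem_center_iff ℂ).mp hcenter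
  exact ⟨c, (congrArg Subtype.val hc).trans (Algebra.algebraMap_eq_smul_one c)⟩

variable [PartialOrder M] [StarOrderedRing M]

/-- A conditional expectation as one of Mathlib's positive linear maps, which gives access to
automatic continuity and `star`-preservation. -/
noncomputable def toPositiveLinearMap (hE : IsCondExp (B : Set M) E) : M →ₚ[ℂ] M :=
  .mk₀ E fun x hx => by
    obtain ⟨y, rfl⟩ := CStarAlgebra.nonneg_iff_eq_star_mul_self.mp hx
    obtain ⟨w, hw⟩ := hE.2.2.1 y
    exact hw ▸ star_mul_self_nonneg w

protected lemma monotone (hE : IsCondExp (B : Set M) E) : Monotone E :=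
  OrderHomClass.mono hE.toPositiveLinearMap

protected lemma map_star (hE : IsCondExp (B : Set M) E) (x : M) : E (star x) = star (E x) :=
  StarHomClass.map_star hE.toPositiveLinearMap x

protected lemma continuous (hE : IsCondExp (B : Set M) E) : Continuous E :=
  map_continuous hE.toPositiveLinearMap

protected lemma map_nonneg (hE : IsCondExp (B : Set M) E) {x : M} (hx : 0 ≤ x) : 0 ≤ E x := by
  simpa using hE.monotone hx

lemma kadison_schwarz (hE : IsCondExp (B : Set M) E) (x : M) :
    star (E x) * E x ≤ E (star x * x) := by
  have hexpand : E (star (x - E x) * (x - E x)) = E (star x * x) - star (E x) * E x := by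
    have : star (x - E x) * (x - E x)
        = star x * x - star x * E x - star (E x) * (x - E x) := by
      rw [star_sub]; noncomm_ring
    rw [this, map_sub, map_sub, hE.map_mul_right (hE.1 x), hE.map_mul_left (star_mem (hE.1 x)),
      map_sub, hE.2.1 _ (hE.1 x), sub_self, mul_zero, sub_zero, hE.map_star]
  exact sub_nonneg.mp (hexpand ▸ hE.map_nonneg (star_mul_self_nonneg (x - E x)))

lemma expand_left (hE : IsCondExp (B : Set M) E) (hl : IsRightQB E l) (x : M) :
    x = ∑ i, l i * E (star (l i) * x) := by
  have := congrArg star (hl (star x))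
  simpa only [star_star, star_sum, star_mul, ← hE.map_star] using this

/-- By the Kadison–Schwarz inequality `E (star x * x) = 0` makes every coefficient
`E (star (l i) * x)` vanish. -/
lemma faithful (hE : IsCondExp (B : Set M) E) (hl : IsRightQB E l) {x : M}
    (hx : E (star x * x) = 0) : x = 0 := by
  rw [hE.expand_left hl x]
  refine Finset.sum_eq_zero fun i _ => ?_
  have hbound : star (star (l i) * x) * (star (l i) * x)
      ≤ ((‖l i‖ ^ 2 : ℝ) : ℂ) • (star x * x) := by
    have h := star_left_conjugate_le_conjugate
      (CStarAlgebra.mul_star_le_algebraMap_norm_sq (a := l i)) x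
    simpa [mul_assoc, Algebra.algebraMap_eq_smul_one, ← Complex.coe_smul] using h
  have hle := (hE.kadison_schwarz _).trans (hE.monotone hbound)
  rw [map_smul, hx, smul_zero] at hle
  rw [CStarRing.star_mul_self_eq_zero_iff _ |>.mp (hle.antisymm (star_mul_self_nonneg _)),
    mul_zero]

lemma faithful_of_nonneg (hE : IsCondExp (B : Set M) E) (hl : IsRightQB E l) {x : M}
    (hx : 0 ≤ x) (hEx : E x = 0) : x = 0 := by
  obtain ⟨y, rfl⟩ := CStarAlgebra.nonneg_iff_eq_star_mul_self.mp hx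
  rw [hE.faithful hl hEx, mul_zero]

end IsCondExp

end CondExp

section Index

variable {M : Type*} [CStarAlgebra M] {B : StarSubalgebra ℂ M} {E : M →ₗ[ℂ] M} {n : ℕ}
  {l : Fin n → M}

/-- The Watatani index functional `x ↦ ∑ i, l i * x * star (l i)` of a quasi-basis `l`; its value
at `1` is the index. -/
noncomputable def indexMap (l : Fin n → M) : M →ₗ[ℂ] M :=
  ∑ i, LinearMap.mulLeftRight ℂ (l i, star (l i))

lemma indexMap_apply (x : M) : indexMap l x = ∑ i, l i * x * star (l i) := by
  simp [indexMap]

lemma star_indexMap (x : M) : star (indexMap l x) = indexMap l (star x) := by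
  simp [indexMap_apply, star_sum, mul_assoc]

lemma continuous_indexMap : Continuous (indexMap l) := by
  have : ⇑(indexMap l) = fun x => ∑ i, l i * x * star (l i) := funext indexMap_apply
  rw [this]
  fun_prop

/-- The possible values of the scalar Watatani index of a finite-index conditional expectation
onto `B`. -/
def watataniIndices (B : StarSubalgebra ℂ M) : Set ℝ :=
  {r | ∃ E : M →ₗ[ℂ] M, IsCondExp (B : Set M) E ∧
    ∃ (n : ℕ) (l : Fin n → M), IsRightQB E l ∧ indexMap l 1 = (r : ℂ) • (1 : M)}

lemma IsCondExp.conj (hE : IsCondExp (B : Set M) E) {k : M} (hk : k ∈ relCommutant B)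
    (hEk : E (star k * k) = 1) :
    IsCondExp (B : Set M) (E ∘ₗ LinearMap.mulLeftRight ℂ (star k, k)) := by
  have hcomm := mem_relCommutant.mp hk
  have hcomm' := mem_relCommutant.mp (star_mem hk)
  refine ⟨fun x => hE.1 _, fun b hb => ?_, fun x => ?_, fun b hb c hc x => ?_⟩
  · rw [LinearMap.comp_apply, LinearMap.mulLeftRight_apply, hcomm' b hb, mul_assoc,
      hE.map_mul_left hb, hEk, mul_one]
  · obtain ⟨y, hy⟩ := hE.2.2.1 (x * k)
    exact ⟨y, by simpa [mul_assoc] using hy⟩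
  · have : star k * (b * x * c) * k = b * (star k * x * k) * c := by
      rw [mul_assoc _ (b * x * c), mul_assoc (b * x), ← hcomm c hc]
      simp only [← mul_assoc, hcomm' b hb]
    simpa only [LinearMap.comp_apply, LinearMap.mulLeftRight_apply, this] using
      hE.2.2.2 b hb c hc _

lemma IsRightQB.conj (hE : IsCondExp (B : Set M) E) (hl : IsRightQB E l) {k : Mˣ}
    (hk : (k : M) ∈ relCommutant B) :
    IsRightQB (E ∘ₗ LinearMap.mulLeftRight ℂ (star (k : M), (k : M))) fun i => l i * ↑k⁻¹ := by
  intro x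
  have hterm : ∀ i, E (star (k : M) * (x * (l i * ↑k⁻¹)) * k) * star (l i * ↑k⁻¹)
      = star (↑k⁻¹ : M) * (E (star (k : M) * x * l i) * star (l i)) := fun i => by
    have hcomm : Commute (star (↑k⁻¹ : M)) (E (star (k : M) * x * l i)) :=
      (hE.commute_relCommutant _ (star_mem hk)).symm.units_inv_left (u := star k)
    rw [show star (k : M) * (x * (l i * ↑k⁻¹)) * k = star (k : M) * x * l i by
      simp [mul_assoc], star_mul, ← mul_assoc, ← mul_assoc, hcomm.eq]
  simp only [LinearMap.comp_apply, LinearMap.mulLeftRight_apply, hterm]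
  rw [← Finset.mul_sum, ← hl, ← mul_assoc, ← star_mul]
  simp

lemma mul_mem_watataniIndices (hE : IsCondExp (B : Set M) E) (hl : IsRightQB E l) {k : Mˣ}
    (hk : (k : M) ∈ relCommutant B) {e c : ℝ} (he : 0 < e)
    (hEk : E (star (k : M) * k) = (e : ℂ) • (1 : M))
    (hck : indexMap l (↑k⁻¹ * star (↑k⁻¹ : M)) = (c : ℂ) • (1 : M)) :
    e * c ∈ watataniIndices B := by
  have hsq : ((√e : ℝ) : ℂ) * (√e : ℝ) = e := by exact_mod_cast Real.mul_self_sqrt he.le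
  have hs : ((√e : ℝ) : ℂ) ≠ 0 := by exact_mod_cast (Real.sqrt_pos.mpr he).ne'
  let u : Mˣ := (Units.mk0 _ hs)⁻¹ • k
  have hu : (u : M) = ((√e : ℝ) : ℂ)⁻¹ • (k : M) := rfl
  have hu_inv : (↑u⁻¹ : M) = ((√e : ℝ) : ℂ) • (↑k⁻¹ : M) := rfl
  have huB : (u : M) ∈ relCommutant B := hu ▸ (relCommutant B).smul_mem hk _
  refine ⟨_, hE.conj huB ?_, n, _, hl.conj hE huB, ?_⟩
  · rw [hu, star_smul, smul_mul_smul_comm, map_smul, hEk, smul_smul, star_inv₀, RCLike.star_def,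
      Complex.conj_ofReal, ← mul_inv, hsq, inv_mul_cancel₀ (by exact_mod_cast he.ne'), one_smul]
  · have hc : indexMap (fun i => l i * ↑u⁻¹) 1 = indexMap l (↑u⁻¹ * star (↑u⁻¹ : M)) := by
      simp [indexMap_apply, mul_assoc]
    rw [hc, hu_inv, star_smul, smul_mul_smul_comm, map_smul, hck, smul_smul, RCLike.star_def,
      Complex.conj_ofReal, hsq, Complex.ofReal_mul]

variable [PartialOrder M] [StarOrderedRing M]

lemma exists_indexMap_eq_smul_one [Algebra.IsCentral ℂ M] (hE : IsCondExp (B : Set M) E)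
    (hl : IsRightQB E l) {d : M} (hd : d ∈ relCommutant B) :
    ∃ c : ℂ, indexMap l d = c • (1 : M) := by
  have hcenter : indexMap l d ∈ Subalgebra.center ℂ M := Subalgebra.mem_center_iff.mpr fun a => by
    have hleft : ∀ i, a * (l i * d * star (l i))
        = ∑ j, l j * (d * E (star (l j) * a * l i)) * star (l i) := fun i => by
      rw [← mul_assoc, ← mul_assoc]
      nth_rw 1 [hE.expand_left hl (a * l i)]
      simp only [Finset.sum_mul, mul_assoc, ← (hE.commute_relCommutant _ hd).eq]
    have hright : ∀ j, l j * d * star (l j) * a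
        = ∑ i, l j * (d * E (star (l j) * a * l i)) * star (l i) := fun j => by
      rw [mul_assoc]
      nth_rw 1 [hl (star (l j) * a)]
      simp only [Finset.mul_sum, mul_assoc]
    rw [indexMap_apply, Finset.mul_sum, Finset.sum_mul, Finset.sum_congr rfl fun i _ => hleft i,
      Finset.sum_congr rfl fun j _ => hright j, Finset.sum_comm]
  obtain ⟨c, hc⟩ := (Algebra.IsCentral.mem_center_iff ℂ).mp hcenter
  exact ⟨c, hc.trans (Algebra.algebraMap_eq_smul_one c)⟩

end Index

section Minimality

open NormedSpace (exp)

lemma mul_eq_mul_of_isLocalMin_exp {R : Type*} [NormedRing R] [NormedAlgebra ℝ R]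
    [CompleteSpace R] (φ ψ : R →L[ℝ] ℝ) (a : R)
    (h : IsLocalMin (fun t : ℝ => φ (exp (t • a)) * ψ (exp (t • -a))) 0) :
    φ a * ψ 1 = φ 1 * ψ a := by
  have hexp : ∀ x : R, HasDerivAt (fun t : ℝ => exp (t • x)) x 0 := fun x => by
    simpa using hasDerivAt_exp_smul_const x (0 : ℝ)
  have hderiv := (φ.hasFDerivAt.comp_hasDerivAt (0 : ℝ) (hexp a)).mul
    (ψ.hasFDerivAt.comp_hasDerivAt (0 : ℝ) (hexp (-a)))
  have hzero := h.hasDerivAt_eq_zero hderiv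
  simp only [Function.comp_apply, zero_smul, NormedSpace.exp_zero, map_neg, mul_neg] at hzero
  linarith

variable {M : Type*} [CStarAlgebra M] {B : StarSubalgebra ℂ M} {E : M →ₗ[ℂ] M} {n : ℕ}
  {l : Fin n → M}

lemma ofReal_re_eq_of_isSelfAdjoint_smul_one [Nontrivial M] {c : ℂ}
    (h : IsSelfAdjoint (c • (1 : M))) : (c.re : ℂ) = c := by
  rw [IsSelfAdjoint, star_smul, star_one] at h
  exact Complex.conj_eq_iff_re.mp (smul_left_injective ℂ one_ne_zero h)

lemma exp_mem_relCommutant {a : M} (ha : a ∈ relCommutant B) : exp a ∈ relCommutant B :=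
  mem_relCommutant.mpr fun b hb =>
    (Commute.exp_left (show Commute a b from mem_relCommutant.mp ha b hb)).eq

variable [PartialOrder M] [StarOrderedRing M]

lemma ofReal_smul_one_nonneg_iff [Nontrivial M] {r : ℝ} : 0 ≤ (r : ℂ) • (1 : M) ↔ 0 ≤ r := by
  rw [Complex.coe_smul, ← Algebra.algebraMap_eq_smul_one, ← map_zero (algebraMap ℝ M),
    algebraMap_le_algebraMap]

lemma le_re_map_mul_re_indexMap [Nontrivial M] [Algebra.IsCentral ℂ M] [Algebra.IsCentral ℂ B]
    (hE : IsCondExp (B : Set M) E) (hl : IsRightQB E l) {r : ℝ}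
    (hr : r ∈ lowerBounds (watataniIndices B)) {f : M →ₗ[ℂ] ℂ} (hf : f 1 = 1) {k : Mˣ}
    (hk : (k : M) ∈ relCommutant B) :
    r ≤ (f (E (star (k : M) * k))).re * (f (indexMap l (↑k⁻¹ * star (↑k⁻¹ : M)))).re := by
  have hk_inv : (↑k⁻¹ : M) ∈ relCommutant B := mem_relCommutant.mpr fun b hb =>
    (Commute.units_inv_left (mem_relCommutant.mp hk b hb)).eq
  obtain ⟨e, he⟩ := hE.exists_eq_smul_one (mul_mem (star_mem hk) hk)
  obtain ⟨c, hc⟩ := exists_indexMap_eq_smul_one hE hl (mul_mem hk_inv (star_mem hk_inv))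
  have hEpos := he ▸ hE.map_nonneg (star_mul_self_nonneg (k : M))
  have he_real := ofReal_re_eq_of_isSelfAdjoint_smul_one (.of_nonneg hEpos)
  have hc_real := ofReal_re_eq_of_isSelfAdjoint_smul_one (M := M) (c := c) <| by
    rw [IsSelfAdjoint, ← hc, star_indexMap, star_mul, star_star]
  rw [← he_real] at he hEpos
  rw [← hc_real] at hc
  have he_pos : 0 < e.re := (ofReal_smul_one_nonneg_iff.mp hEpos).lt_of_ne' fun h0 =>
    k.ne_zero (hE.faithful hl (by rw [he, h0, Complex.ofReal_zero, zero_smul]))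
  simpa [he, hc, hf] using hr (mul_mem_watataniIndices hE hl hk he_pos he hc)

lemma le_re_map_mul_re_indexMap_exp [Nontrivial M] [Algebra.IsCentral ℂ M] [Algebra.IsCentral ℂ B]
    (hE : IsCondExp (B : Set M) E) (hl : IsRightQB E l) {r : ℝ}
    (hr : r ∈ lowerBounds (watataniIndices B)) {f : M →ₗ[ℂ] ℂ} (hf : f 1 = 1) {a : M}
    (ha : a ∈ relCommutant B) (hsa : IsSelfAdjoint a) :
    r ≤ (f (E (exp (a + a)))).re * (f (indexMap l (exp (-(a + a))))).re := by
  let +nondep : NormedAlgebra ℚ M := .restrictScalars ℚ ℂ M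
  have hinv : ∀ b : M, exp b * exp (-b) = 1 := fun b => by
    rw [← NormedSpace.exp_add_of_commute (Commute.refl b).neg_right, add_neg_cancel,
      NormedSpace.exp_zero]
  let k : Mˣ := ⟨exp a, exp (-a), hinv a, by simpa using hinv (-a)⟩
  have hk := le_re_map_mul_re_indexMap hE hl hr hf (k := k) (exp_mem_relCommutant ha)
  have hstar : star (exp a) = exp a := by rw [NormedSpace.star_exp, hsa.star_eq]
  have hstar_neg : star (exp (-a)) = exp (-a) := by rw [NormedSpace.star_exp, hsa.neg.star_eq]
  rw [neg_add, NormedSpace.exp_add_of_commute (.refl a),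
    NormedSpace.exp_add_of_commute (.refl (-a))]
  change r ≤ (f (E (star (exp a) * exp a))).re
    * (f (indexMap l (exp (-a) * star (exp (-a))))).re at hk
  rwa [hstar, hstar_neg] at hk

/-- The first variation of the minimality condition along the perturbations by `exp (t • a)`. -/
lemma indexMap_eq_smul_of_isSelfAdjoint [Algebra.IsCentral ℂ M] [Algebra.IsCentral ℂ B]
    (hE : IsCondExp (B : Set M) E) (hl : IsRightQB E l) {r : ℝ}
    (hr : r ∈ lowerBounds (watataniIndices B)) (hlr : indexMap l 1 = (r : ℂ) • (1 : M))
    {a : M} (ha : a ∈ relCommutant B) (hsa : IsSelfAdjoint a) :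
    indexMap l a = (r : ℂ) • E a := by
  rcases subsingleton_or_nontrivial M with hM | hM
  · exact Subsingleton.elim _ _
  obtain ⟨f, -, hf⟩ := exists_dual_vector ℂ (1 : M) (norm_ne_zero_iff.mpr one_ne_zero)
  rw [norm_one, RCLike.ofReal_one] at hf
  let φ : M →L[ℝ] ℝ := Complex.reCLM ∘L (f ∘L ⟨E, hE.continuous⟩).restrictScalars ℝ
  let ψ : M →L[ℝ] ℝ := Complex.reCLM ∘L (f ∘L ⟨indexMap l, continuous_indexMap⟩).restrictScalars ℝ
  have hφ : ∀ x, φ x = (f (E x)).re := fun _ => rfl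
  have hψ : ∀ x, ψ x = (f (indexMap l x)).re := fun _ => rfl
  have hφ1 : φ 1 = 1 := by rw [hφ, hE.map_one, hf, Complex.one_re]
  have hψ1 : ψ 1 = r := by simp [hψ, hlr, hf]
  have hmin : IsLocalMin (fun t : ℝ => φ (exp (t • (a + a))) * ψ (exp (t • -(a + a)))) 0 := by
    refine .of_forall fun t => ?_
    have hle := le_re_map_mul_re_indexMap_exp hE hl hr (f := (f : M →ₗ[ℂ] ℂ)) hf
      ((relCommutant B).smul_mem ha (t : ℂ)) (.smul (Complex.conj_ofReal t) hsa)
    simp only [Complex.coe_smul, ← smul_add, ← smul_neg] at hle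
    simpa [hφ1, hψ1, hφ, hψ] using hle
  have hvar := mul_eq_mul_of_isLocalMin_exp φ ψ (a + a) hmin
  rw [hφ1, hψ1, map_add, map_add] at hvar
  obtain ⟨e, he⟩ := hE.exists_eq_smul_one ha
  obtain ⟨c, hc⟩ := exists_indexMap_eq_smul_one hE hl ha
  have he_real := ofReal_re_eq_of_isSelfAdjoint_smul_one (M := M) (c := e) <| by
    rw [IsSelfAdjoint, ← he, ← hE.map_star, hsa]
  have hc_real := ofReal_re_eq_of_isSelfAdjoint_smul_one (M := M) (c := c) <| by
    rw [IsSelfAdjoint, ← hc, star_indexMap, hsa]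
  have hre : c.re = r * e.re := by
    simp only [hφ, hψ, he, hc, map_smul, hf, smul_eq_mul, mul_one, one_mul] at hvar
    linarith
  rw [hc, he, smul_smul, ← he_real, ← hc_real, hre, Complex.ofReal_mul]

lemma indexMap_eq_smul [Algebra.IsCentral ℂ M] [Algebra.IsCentral ℂ B]
    (hE : IsCondExp (B : Set M) E) (hl : IsRightQB E l) {r : ℝ}
    (hr : r ∈ lowerBounds (watataniIndices B)) (hlr : indexMap l 1 = (r : ℂ) • (1 : M))
    {d : M} (hd : d ∈ relCommutant B) : indexMap l d = (r : ℂ) • E d := by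
  have hstar := star_mem hd
  have hre : (realPart d : M) ∈ relCommutant B := by
    simpa [realPart_apply_coe, ← Complex.coe_smul] using
      (relCommutant B).smul_mem (add_mem hd hstar) (2 : ℂ)⁻¹
  have him : (imaginaryPart d : M) ∈ relCommutant B := by
    rw [imaginaryPart_apply_coe, ← Complex.coe_smul]
    exact (relCommutant B).smul_mem ((relCommutant B).smul_mem (sub_mem hd hstar) _) _
  rw [← realPart_add_I_smul_imaginaryPart d, map_add, map_smul, map_add, map_smul,
    indexMap_eq_smul_of_isSelfAdjoint hE hl hr hlr hre (realPart d).2,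
    indexMap_eq_smul_of_isSelfAdjoint hE hl hr hlr him (imaginaryPart d).2, smul_add,
    smul_comm (r : ℂ)]

end Minimality

section Centralizer

variable {M : Type*} [CStarAlgebra M] [PartialOrder M] [StarOrderedRing M]
  {B : StarSubalgebra ℂ M} {E : M →ₗ[ℂ] M} {n : ℕ} {l : Fin n → M}

/-- The relative commutant of `B` lies in the centralizer of the conditional expectation `E`. -/
def IsCommutantCentral (B : StarSubalgebra ℂ M) (E : M →ₗ[ℂ] M) : Prop :=
  ∀ d ∈ relCommutant B, ∀ x, E (d * x) = E (x * d)

lemma IsCondExp.exists_modular (hE : IsCondExp (B : Set M) E) (hl : IsRightQB E l) {d : M}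
    (hd : d ∈ relCommutant B) : ∃ s ∈ relCommutant B, ∀ x, E (d * x) = E (x * s) := by
  set s := ∑ i, l i * E (d * star (l i))
  have hs : ∀ x, E (d * x) = E (x * s) := fun x => by
    have hterm : ∀ i, E (d * (E (x * l i) * star (l i))) = E (x * (l i * E (d * star (l i)))) :=
      fun i => by
        rw [← mul_assoc, ← (hE.commute_relCommutant _ hd).eq, mul_assoc,
          hE.map_mul_left (hE.1 _), ← mul_assoc, hE.map_mul_right (hE.1 _)]
    nth_rw 1 [hl x]
    simp only [s, Finset.mul_sum, map_sum, hterm]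
  refine ⟨s, mem_relCommutant.mpr fun b hb => ?_, hs⟩
  have hzero : ∀ x, E (x * (s * b - b * s)) = 0 := fun x => by
    rw [mul_sub, map_sub, ← mul_assoc, ← mul_assoc, hE.map_mul_right hb, ← hs, ← hs,
      ← hE.map_mul_right hb, mul_assoc, sub_self]
  exact sub_eq_zero.mp (hE.faithful hl (hzero _))

lemma indexMap_mul_eq_of_modular (hE : IsCondExp (B : Set M) E) (hl : IsRightQB E l) {d s x : M}
    (hs : ∀ x, E (d * x) = E (x * s)) (hx : x ∈ relCommutant B) :
    indexMap l (x * d) = indexMap l (s * x) := by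
  have hleft : ∀ i, l i * (x * d) * star (l i)
      = ∑ j, l i * E (star (l i) * (l j * s)) * x * star (l j) := fun i => by
    rw [mul_assoc, mul_assoc]
    nth_rw 1 [hl (d * star (l i))]
    simp only [Finset.mul_sum, mul_assoc, hs]
    refine Finset.sum_congr rfl fun j _ => ?_
    rw [← mul_assoc x, ← (hE.commute_relCommutant _ hx).eq, mul_assoc]
  have hright : ∀ j, l j * (s * x) * star (l j)
      = ∑ i, l i * E (star (l i) * (l j * s)) * x * star (l j) := fun j => by
    rw [← mul_assoc (l j)]
    nth_rw 1 [hE.expand_left hl (l j * s)]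
    simp only [Finset.sum_mul]
  rw [indexMap_apply, indexMap_apply, Finset.sum_congr rfl fun i _ => hleft i,
    Finset.sum_congr rfl fun j _ => hright j, Finset.sum_comm]

/-- With `E (d * x) = E (x * s)` for all `x`, the element `y = s - d` satisfies
`E (y * x) = -E (x * y)` on the relative commutant; at `x = star y` both sides vanish by
positivity. -/
lemma isCommutantCentral_of_indexMap_eq_smul (hE : IsCondExp (B : Set M) E) (hl : IsRightQB E l)
    {c : ℂ} (hc : c ≠ 0) (hindex : ∀ d ∈ relCommutant B, indexMap l d = c • E d) :
    IsCommutantCentral B E := by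
  intro d hd
  obtain ⟨s, hsB, hs⟩ := hE.exists_modular hl hd
  have hmodular : ∀ x ∈ relCommutant B, E (x * d) = E (s * x) := fun x hx => by
    refine smul_right_injective M hc ?_
    simp only [← hindex _ (mul_mem hx hd), ← hindex _ (mul_mem hsB hx),
      indexMap_mul_eq_of_modular hE hl hs hx]
  have hanti : E ((s - d) * star (s - d)) = -E (star (s - d) * (s - d)) := by
    rw [sub_mul, mul_sub, map_sub, map_sub, hmodular _ (star_mem (sub_mem hsB hd)), hs, neg_sub]
  have hnonpos : E (star (s - d) * (s - d)) ≤ 0 :=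
    neg_nonneg.mp (hanti ▸ hE.map_nonneg (mul_star_self_nonneg _))
  have hsd : s - d = 0 :=
    hE.faithful hl (hnonpos.antisymm (hE.map_nonneg (star_mul_self_nonneg _)))
  intro x
  rw [hs, sub_eq_zero.mp hsd]

lemma sum_mul_star_le_indexMap_one (hE : IsCondExp (B : Set M) E) (hl : IsRightQB E l)
    {ι : Type*} [Fintype ι] [DecidableEq ι] {d : ι → M}
    (hd : ∀ i j, E (star (d i) * d j) = if i = j then 1 else 0) :
    ∑ j, d j * star (d j) ≤ indexMap l 1 := by
  let P : M → M := fun y => ∑ j, d j * E (star (d j) * y)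
  have hcross : ∑ i, P (l i) * star (l i) = ∑ j, d j * star (d j) := by
    simp only [P, Finset.sum_mul, mul_assoc]
    rw [Finset.sum_comm]
    simp only [← Finset.mul_sum]
    exact Finset.sum_congr rfl fun j _ => by rw [← hl]
  have hcross_star : ∑ i, l i * star (P (l i)) = ∑ j, d j * star (d j) := by
    simpa [star_sum] using congrArg star hcross
  have hfix : ∀ k, ∑ i, P (l i) * E (star (l i) * d k) = d k := fun k => by
    simp only [P, Finset.sum_mul, mul_assoc, ← hE.map_mul_right (hE.1 _)]
    rw [Finset.sum_comm]
    simp only [← Finset.mul_sum, ← map_sum, ← hE.expand_left hl, hd]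
    simp
  have hstar : ∀ y, star (P y) = ∑ k, E (star y * d k) * star (d k) := fun y => by
    simp [P, star_sum, ← hE.map_star]
  have hsquare : ∑ i, P (l i) * star (P (l i)) = ∑ j, d j * star (d j) := by
    simp only [hstar, Finset.mul_sum, ← mul_assoc]
    rw [Finset.sum_comm]
    simp only [← Finset.sum_mul, hfix]
  have hexpand : ∑ i, (l i - P (l i)) * star (l i - P (l i))
      = indexMap l 1 - ∑ j, d j * star (d j) := by
    simp only [star_sub, sub_mul, mul_sub, Finset.sum_sub_distrib, hcross, hcross_star, hsquare,
      indexMap_apply, mul_one, sub_self, sub_zero]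
  exact sub_nonneg.mp (hexpand ▸ Finset.sum_nonneg fun i _ => mul_star_self_nonneg _)

lemma one_le_of_indexMap_one [Nontrivial M] (hE : IsCondExp (B : Set M) E) (hl : IsRightQB E l)
    {r : ℝ} (hlr : indexMap l 1 = (r : ℂ) • (1 : M)) : 1 ≤ r := by
  have hle := sum_mul_star_le_indexMap_one hE hl (d := fun _ : Unit => (1 : M))
    (by simp [hE.map_one])
  rw [hlr] at hle
  have : 0 ≤ ((r - 1 : ℝ) : ℂ) • (1 : M) := by simpa [sub_smul] using hle
  exact sub_nonneg.mp (ofReal_smul_one_nonneg_iff.mp this)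

lemma isCommutantCentral_of_mem_lowerBounds [Algebra.IsCentral ℂ M] [Algebra.IsCentral ℂ B]
    (hE : IsCondExp (B : Set M) E) (hl : IsRightQB E l) {r : ℝ}
    (hr : r ∈ lowerBounds (watataniIndices B)) (hlr : indexMap l 1 = (r : ℂ) • (1 : M)) :
    IsCommutantCentral B E := by
  rcases subsingleton_or_nontrivial M with hM | hM
  · exact fun _ _ _ => Subsingleton.elim _ _
  have hr_pos : 0 < r := zero_lt_one.trans_le (one_le_of_indexMap_one hE hl hlr)
  exact isCommutantCentral_of_indexMap_eq_smul hE hl (Complex.ofReal_ne_zero.mpr hr_pos.ne')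
    fun d hd => indexMap_eq_smul hE hl hr hlr hd

lemma card_le_of_orthonormal [Nontrivial M] (hE : IsCondExp (B : Set M) E) (hl : IsRightQB E l)
    (hcentral : IsCommutantCentral B E) {r : ℝ} (hlr : indexMap l 1 = (r : ℂ) • (1 : M))
    {ι : Type*} [Fintype ι] [DecidableEq ι] {d : ι → M} (hdB : ∀ i, d i ∈ relCommutant B)
    (hd : ∀ i j, E (star (d i) * d j) = if i = j then 1 else 0) : Fintype.card ι ≤ r := by
  have hle := hE.monotone (sum_mul_star_le_indexMap_one hE hl hd)
  have hcard : E (∑ j, d j * star (d j)) = ((Fintype.card ι : ℝ) : ℂ) • (1 : M) := by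
    simp [hcentral _ (hdB _), hd, Algebra.smul_def]
  rwa [hcard, hlr, map_smul, hE.map_one, ← sub_nonneg, ← sub_smul, ← Complex.ofReal_sub,
    ofReal_smul_one_nonneg_iff, sub_nonneg] at hle

end Centralizer

section Frame

lemma finiteDimensional_of_forall_orthonormal_le {𝕜 V : Type*} [RCLike 𝕜] [NormedAddCommGroup V]
    [InnerProductSpace 𝕜 V] {N : ℕ} (h : ∀ (m : ℕ) (v : Fin m → V), Orthonormal 𝕜 v → m ≤ N) :
    FiniteDimensional 𝕜 V := by
  by_contra hinf
  have hrank : ((N + 1 : ℕ) : Cardinal) ≤ Module.rank 𝕜 V :=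
    Cardinal.natCast_le_aleph0.trans
      (not_lt.mp fun hlt => hinf (Module.rank_lt_aleph0_iff.mp hlt))
  obtain ⟨v, hv⟩ := Module.le_rank_iff.mp hrank
  exact (h _ _ (InnerProductSpace.gramSchmidtNormed_orthonormal hv)).not_gt N.lt_succ_self

/-- A core, unlike an `InnerProductSpace` instance, may be used on spaces that carry a norm
already. -/
lemma exists_frame_of_forall_orthonormal_le {𝕜 V : Type*} [RCLike 𝕜] [AddCommGroup V] [Module 𝕜 V]
    (core : InnerProductSpace.Core 𝕜 V) {N : ℕ}
    (h : ∀ (m : ℕ) (v : Fin m → V),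
      (∀ i j, core.inner (v i) (v j) = if i = j then 1 else 0) → m ≤ N) :
    ∃ (m : ℕ) (v : Fin m → V), ∀ y, y = ∑ i, core.inner (v i) y • v i := by
  let := core.toNormedAddCommGroup
  let := InnerProductSpace.ofCore core.toCore
  have := finiteDimensional_of_forall_orthonormal_le (𝕜 := 𝕜) (V := V) fun m v hv =>
    h m v (orthonormal_iff_ite.mp hv)
  exact ⟨_, stdOrthonormalBasis 𝕜 V, fun y => ((stdOrthonormalBasis 𝕜 V).sum_repr' y).symm⟩

end Frame

section CommutantQuasiBasis

variable {M : Type*} [CStarAlgebra M] {B : StarSubalgebra ℂ M} {E : M →ₗ[ℂ] M} {n : ℕ}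
  {l : Fin n → M} {m : ℕ} {d : Fin m → M}

/-- A finite family in the relative commutant of `B` that is a quasi-basis for the restriction of
`E` to the relative commutant. -/
structure IsCommutantQuasiBasis (B : StarSubalgebra ℂ M) (E : M →ₗ[ℂ] M) (d : Fin m → M) :
    Prop where
  mem : ∀ j, d j ∈ relCommutant B
  expand : ∀ y ∈ relCommutant B, y = ∑ j, E (y * d j) * star (d j)

lemma IsCondExp.eq_smul_one [Algebra.IsCentral ℂ B] (hE : IsCondExp (B : Set M) E)
    {f : M →ₗ[ℂ] ℂ} (hf : f 1 = 1) {d : M} (hd : d ∈ relCommutant B) :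
    E d = f (E d) • (1 : M) := by
  obtain ⟨c, hc⟩ := hE.exists_eq_smul_one hd
  rw [hc, map_smul, hf, smul_eq_mul, mul_one]

variable [PartialOrder M] [StarOrderedRing M]

lemma IsCommutantQuasiBasis.expand_left (hd : IsCommutantQuasiBasis B E d)
    (hE : IsCondExp (B : Set M) E) {y : M} (hy : y ∈ relCommutant B) :
    y = ∑ j, d j * E (star (d j) * y) := by
  have := congrArg star (hd.expand _ (star_mem hy))
  simpa only [star_star, star_sum, star_mul, ← hE.map_star] using this

/-- The inner product `(x, y) ↦ E (star x * y)` on the relative commutant of `B`, where `E` is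
scalar valued; a functional `f` with `f 1 = 1` reads off the scalar. -/
noncomputable abbrev commutantCore [Nontrivial M] [Algebra.IsCentral ℂ B]
    (hE : IsCondExp (B : Set M) E) (hl : IsRightQB E l) {f : M →ₗ[ℂ] ℂ} (hf : f 1 = 1) :
    InnerProductSpace.Core ℂ (relCommutant B) where
  inner x y := f (E (star (x : M) * y))
  conj_inner_symm x y := by
    have h := congrArg star (hE.eq_smul_one hf (mul_mem (star_mem y.2) x.2))
    rw [← hE.map_star, star_mul, star_star, star_smul, star_one] at h
    rw [h, map_smul, hf, smul_eq_mul, mul_one, RCLike.star_def]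
  re_inner_nonneg x := by
    have h := hE.map_nonneg (star_mul_self_nonneg (x : M))
    rw [hE.eq_smul_one hf (mul_mem (star_mem x.2) x.2)] at h
    rw [← ofReal_re_eq_of_isSelfAdjoint_smul_one (.of_nonneg h)] at h
    exact ofReal_smul_one_nonneg_iff.mp h
  add_left x y z := by simp [add_mul]
  smul_left x y c := by simp
  definite x hx := by
    have h := hE.eq_smul_one hf (mul_mem (star_mem x.2) x.2)
    rw [hx, zero_smul] at h
    exact Subtype.ext (hE.faithful hl h)

lemma exists_isCommutantQuasiBasis [Algebra.IsCentral ℂ B]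
    (hE : IsCondExp (B : Set M) E) (hl : IsRightQB E l) (hcentral : IsCommutantCentral B E) {r : ℝ}
    (hlr : indexMap l 1 = (r : ℂ) • (1 : M)) :
    ∃ (m : ℕ) (d : Fin m → M), IsCommutantQuasiBasis B E d := by
  rcases subsingleton_or_nontrivial M with hM | hM
  · exact ⟨0, Fin.elim0, fun j => j.elim0, fun _ _ => Subsingleton.elim _ _⟩
  obtain ⟨f, -, hf⟩ := exists_dual_vector ℂ (1 : M) (norm_ne_zero_iff.mpr one_ne_zero)
  rw [norm_one, RCLike.ofReal_one] at hf
  have hscalar : ∀ y ∈ relCommutant B, E y = f (E y) • (1 : M) := fun y hy =>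
    hE.eq_smul_one (f := (f : M →ₗ[ℂ] ℂ)) hf hy
  obtain ⟨m, v, hv⟩ := exists_frame_of_forall_orthonormal_le
    (commutantCore hE hl (f := (f : M →ₗ[ℂ] ℂ)) hf) (N := ⌊r⌋₊) fun m v hv => by
      have horth : ∀ i j, E (star (v i : M) * v j) = if i = j then 1 else 0 := fun i j => by
        rw [hscalar _ (mul_mem (star_mem (v i).2) (v j).2)]
        refine (congrArg (· • (1 : M)) (hv i j)).trans ?_
        rw [ite_smul, one_smul, zero_smul]
      simpa using Nat.le_floor (card_le_of_orthonormal hE hl hcentral hlr (fun i => (v i).2) horth)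
  refine ⟨m, fun i => star (v i : M), fun i => star_mem (v i).2, fun y hy => ?_⟩
  have hexpand : y = ∑ i, f (E (star (v i : M) * y)) • (v i : M) := by
    refine (congrArg Subtype.val (hv ⟨y, hy⟩)).trans ?_
    rw [AddSubmonoidClass.coe_finsetSum]
    rfl
  refine hexpand.trans (Finset.sum_congr rfl fun i _ => ?_)
  rw [star_star, ← hcentral _ (star_mem (v i).2), hscalar _ (mul_mem (star_mem (v i).2) hy),
    smul_one_mul, map_smul]
  simp [hf]

end CommutantQuasiBasis

section CommutantProjection

variable {M : Type*} [CStarAlgebra M] {B : StarSubalgebra ℂ M} {E : M →ₗ[ℂ] M} {n : ℕ}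
  {l : Fin n → M} {m : ℕ} {d : Fin m → M}

lemma genC_le {C : StarSubalgebra ℂ M} (hclosed : IsClosed (C : Set M)) (hB : B ≤ C)
    (hcomm : relCommutant B ≤ C) : genC (B : Set M) ≤ C :=
  StarSubalgebra.topologicalClosure_minimal
    (StarAlgebra.adjoin_le (Set.union_subset hB fun _ hx => hcomm (mem_relCommutant.mpr hx)))
    hclosed

/-- The orthogonal complement of the relative commutant of `B`, and in fact of `genC B`, for the
`B`-valued inner product `E (star x * y)`. -/
def commutantOrtho (B : StarSubalgebra ℂ M) (E : M →ₗ[ℂ] M) : Submodule ℂ M where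
  carrier := {w | ∀ y ∈ relCommutant B, E (w * y) = 0}
  add_mem' hv hw y hy := by rw [add_mul, map_add, hv y hy, hw y hy, add_zero]
  zero_mem' y _ := by rw [zero_mul, map_zero]
  smul_mem' c w hw y hy := by rw [smul_mul_assoc, map_smul, hw y hy, smul_zero]

lemma map_eq_zero_of_mem_commutantOrtho {w : M} (hw : w ∈ commutantOrtho B E) : E w = 0 := by
  simpa using hw 1 (one_mem _)

/-- The map `x ↦ ∑ j, E (x * d j) * star (d j)`, which is the orthogonal projection onto `genC B`
when `d` is a quasi-basis of the relative commutant. -/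
noncomputable def commutantProj (E : M →ₗ[ℂ] M) (d : Fin m → M) : M →ₗ[ℂ] M :=
  ∑ j, LinearMap.mulRight ℂ (star (d j)) ∘ₗ E ∘ₗ LinearMap.mulRight ℂ (d j)

lemma commutantProj_apply (x : M) : commutantProj E d x = ∑ j, E (x * d j) * star (d j) := by
  simp [commutantProj]

lemma commutantProj_mem_genC (hE : IsCondExp (B : Set M) E) (hd : IsCommutantQuasiBasis B E d)
    (x : M) : commutantProj E d x ∈ genC (B : Set M) := by
  rw [commutantProj_apply]
  exact sum_mem fun j _ =>
    mul_mem (le_genC (hE.1 _)) (relCommutant_le_genC (star_mem (hd.mem j)))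

variable [PartialOrder M] [StarOrderedRing M]

lemma isClosed_commutantOrtho (hE : IsCondExp (B : Set M) E) :
    IsClosed (commutantOrtho B E : Set M) := by
  have hcont := hE.continuous
  have : (commutantOrtho B E : Set M) = ⋂ y ∈ relCommutant B, {w | E (w * y) = 0} := by
    ext w
    simp [commutantOrtho]
  rw [this]
  exact isClosed_biInter fun y _ => isClosed_eq (by fun_prop) continuous_const

lemma star_mem_commutantOrtho (hE : IsCondExp (B : Set M) E) (hcentral : IsCommutantCentral B E)
    {w : M} (hw : w ∈ commutantOrtho B E) : star w ∈ commutantOrtho B E := fun y hy => by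
  rw [← star_star y, ← star_mul, hE.map_star, hcentral _ (star_mem hy), hw _ (star_mem hy),
    star_zero]

/-- The elements whose left and right multiplications preserve `commutantOrtho B E`. -/
def commutantOrthoMultiplier (hE : IsCondExp (B : Set M) E) (hcentral : IsCommutantCentral B E) :
    StarSubalgebra ℂ M where
  carrier := {c | ∀ w ∈ commutantOrtho B E, c * w ∈ commutantOrtho B E ∧ w * c ∈ commutantOrtho B E}
  mul_mem' ha hb w hw := by
    rw [mul_assoc, ← mul_assoc w]
    exact ⟨(ha _ (hb w hw).1).1, (hb _ (ha w hw).2).2⟩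
  add_mem' ha hb w hw := by
    rw [add_mul, mul_add]
    exact ⟨add_mem (ha w hw).1 (hb w hw).1, add_mem (ha w hw).2 (hb w hw).2⟩
  algebraMap_mem' c w hw := by
    rw [← Algebra.commutes, Algebra.algebraMap_eq_smul_one, smul_one_mul]
    exact ⟨Submodule.smul_mem _ c hw, Submodule.smul_mem _ c hw⟩
  star_mem' {c} hc w hw := by
    have hw' := hc _ (star_mem_commutantOrtho hE hcentral hw)
    constructor
    · simpa using star_mem_commutantOrtho hE hcentral hw'.2
    · simpa using star_mem_commutantOrtho hE hcentral hw'.1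

lemma genC_le_commutantOrthoMultiplier (hE : IsCondExp (B : Set M) E)
    (hcentral : IsCommutantCentral B E) :
    genC (B : Set M) ≤ commutantOrthoMultiplier hE hcentral := by
  refine genC_le ?_ (fun b hb w hw => ⟨fun y hy => ?_, fun y hy => ?_⟩)
    fun e he w hw => ⟨fun y hy => ?_, fun y hy => ?_⟩
  · have hclosed := isClosed_commutantOrtho hE
    have : (commutantOrthoMultiplier hE hcentral : Set M) = ⋂ w ∈ commutantOrtho B E,
        ((· * w) ⁻¹' commutantOrtho B E ∩ (w * ·) ⁻¹' commutantOrtho B E) := by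
      ext c
      simp [commutantOrthoMultiplier]
    rw [this]
    exact isClosed_biInter fun w _ =>
      (hclosed.preimage (by fun_prop)).inter (hclosed.preimage (by fun_prop))
  · rw [mul_assoc, hE.map_mul_left hb, hw y hy, mul_zero]
  · rw [mul_assoc, ← mem_relCommutant.mp hy b hb, ← mul_assoc, hE.map_mul_right hb, hw y hy,
      zero_mul]
  · rw [mul_assoc, hcentral e he, mul_assoc, hw _ (mul_mem hy he)]
  · rw [mul_assoc, hw _ (mul_mem he hy)]

lemma eq_zero_of_mem_genC_of_mem_commutantOrtho (hE : IsCondExp (B : Set M) E)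
    (hl : IsRightQB E l) (hcentral : IsCommutantCentral B E) {w : M} (hwC : w ∈ genC (B : Set M))
    (hw : w ∈ commutantOrtho B E) : w = 0 :=
  hE.faithful hl <| map_eq_zero_of_mem_commutantOrtho
    (genC_le_commutantOrthoMultiplier hE hcentral (star_mem hwC) w hw).1

lemma sub_commutantProj_mem_commutantOrtho (hE : IsCondExp (B : Set M) E)
    (hd : IsCommutantQuasiBasis B E d) (x : M) : x - commutantProj E d x ∈ commutantOrtho B E := by
  intro y hy
  have hxy : E (x * y) = ∑ j, E (x * d j) * E (star (d j) * y) := by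
    conv_lhs => rw [hd.expand_left hE hy]
    simp only [Finset.mul_sum, map_sum, ← mul_assoc, hE.map_mul_right (hE.1 _)]
  rw [sub_mul, map_sub, hxy, commutantProj_apply, Finset.sum_mul, map_sum, sub_eq_zero]
  exact Finset.sum_congr rfl fun j _ => by rw [mul_assoc, hE.map_mul_left (hE.1 _)]

lemma map_commutantProj (hE : IsCondExp (B : Set M) E) (hd : IsCommutantQuasiBasis B E d) (x : M) :
    E (commutantProj E d x) = E x := by
  have h := map_eq_zero_of_mem_commutantOrtho (sub_commutantProj_mem_commutantOrtho hE hd x)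
  rw [map_sub] at h
  exact (sub_eq_zero.mp h).symm

lemma commutantProj_eq_of_sub_mem_commutantOrtho (hE : IsCondExp (B : Set M) E)
    (hl : IsRightQB E l) (hcentral : IsCommutantCentral B E) (hd : IsCommutantQuasiBasis B E d)
    {x c : M} (hc : c ∈ genC (B : Set M)) (hx : x - c ∈ commutantOrtho B E) :
    commutantProj E d x = c := by
  refine sub_eq_zero.mp (eq_zero_of_mem_genC_of_mem_commutantOrtho hE hl hcentral
    (sub_mem (commutantProj_mem_genC hE hd x) hc) ?_)
  simpa using sub_mem hx (sub_commutantProj_mem_commutantOrtho hE hd x)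

lemma commutantProj_mul_mul (hE : IsCondExp (B : Set M) E)
    (hl : IsRightQB E l) (hcentral : IsCommutantCentral B E) (hd : IsCommutantQuasiBasis B E d)
    {a b : M} (ha : a ∈ genC (B : Set M)) (hb : b ∈ genC (B : Set M)) (x : M) :
    commutantProj E d (a * x * b) = a * commutantProj E d x * b := by
  refine commutantProj_eq_of_sub_mem_commutantOrtho hE hl hcentral hd
    (mul_mem (mul_mem ha (commutantProj_mem_genC hE hd x)) hb) ?_
  rw [← sub_mul, ← mul_sub]
  have hmul := genC_le_commutantOrthoMultiplier hE hcentral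
  exact (hmul hb _ (hmul ha _ (sub_commutantProj_mem_commutantOrtho hE hd x)).1).2

lemma commutantProj_star (hE : IsCondExp (B : Set M) E)
    (hl : IsRightQB E l) (hcentral : IsCommutantCentral B E) (hd : IsCommutantQuasiBasis B E d)
    (x : M) : commutantProj E d (star x) = star (commutantProj E d x) := by
  refine commutantProj_eq_of_sub_mem_commutantOrtho hE hl hcentral hd
    (star_mem (commutantProj_mem_genC hE hd x)) ?_
  rw [← star_sub]
  exact star_mem_commutantOrtho hE hcentral (sub_commutantProj_mem_commutantOrtho hE hd x)

/-- Compressing `a` by its negative part gives `-(a⁻)³`. -/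
lemma nonneg_of_forall_map_conjugate_nonneg (hE : IsCondExp (B : Set M) E) (hl : IsRightQB E l)
    {C : StarSubalgebra ℂ M} (hclosed : IsClosed (C : Set M)) {a : M} (ha : a ∈ C)
    (hsa : IsSelfAdjoint a) (hpos : ∀ c ∈ C, 0 ≤ E (star c * a * c)) : 0 ≤ a := by
  have hmem : a⁻ ∈ C := CFC.negPart_def a ▸ cfcₙ_mem (𝕜' := ℂ) (s := C) _ ha
  have hneg : 0 ≤ a⁻ := CFC.negPart_nonneg a
  have hstar : star a⁻ = a⁻ := IsSelfAdjoint.of_nonneg hneg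
  have hcompress : star a⁻ * a * a⁻ = -(a⁻ * a⁻ * a⁻) := by
    have hmul : a⁻ * a = -(a⁻ * a⁻) := by
      nth_rw 2 [← CFC.posPart_sub_negPart a hsa]
      rw [mul_sub, CFC.negPart_mul_posPart, zero_sub]
    rw [hstar, hmul, neg_mul]
  have hcube_nonneg : 0 ≤ a⁻ * a⁻ * a⁻ := by
    simpa only [hstar] using star_left_conjugate_nonneg hneg a⁻
  have hE_nonpos : E (a⁻ * a⁻ * a⁻) ≤ 0 :=
    neg_nonneg.mp (by simpa only [hcompress, map_neg] using hpos _ hmem)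
  have hcube : a⁻ * a⁻ * a⁻ = 0 :=
    hE.faithful_of_nonneg hl hcube_nonneg (hE_nonpos.antisymm (hE.map_nonneg hcube_nonneg))
  have hsq : a⁻ * a⁻ = 0 := by
    rw [← CStarRing.star_mul_self_eq_zero_iff, star_mul, hstar, ← mul_assoc, hcube, zero_mul]
  refine (CFC.negPart_eq_zero_iff a hsa).mp ?_
  rw [← CStarRing.star_mul_self_eq_zero_iff, hstar, hsq]

lemma isCondExp_commutantProj (hE : IsCondExp (B : Set M) E) (hl : IsRightQB E l)
    (hcentral : IsCommutantCentral B E) (hd : IsCommutantQuasiBasis B E d) :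
    IsCondExp (genC (B : Set M) : Set M) (commutantProj E d) := by
  have hmul {a b : M} (ha : a ∈ genC (B : Set M)) (hb : b ∈ genC (B : Set M)) (x : M) :=
    commutantProj_mul_mul hE hl hcentral hd ha hb x
  refine ⟨commutantProj_mem_genC hE hd, fun c hc => ?_, fun x => ?_,
    fun a ha b hb x => hmul ha hb x⟩
  · refine commutantProj_eq_of_sub_mem_commutantOrtho hE hl hcentral hd hc ?_
    rw [sub_self]
    exact zero_mem _
  · refine CStarAlgebra.nonneg_iff_eq_star_mul_self.mp (nonneg_of_forall_map_conjugate_nonneg hE hl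
      (StarSubalgebra.isClosed_topologicalClosure _) (commutantProj_mem_genC hE hd _) ?_
      fun c hc => ?_)
    · rw [IsSelfAdjoint, ← commutantProj_star hE hl hcentral hd, star_mul, star_star]
    · rw [← hmul (star_mem hc) hc, map_commutantProj hE hd]
      exact hE.map_nonneg (star_left_conjugate_nonneg (star_mul_self_nonneg x) c)

end CommutantProjection

section FiniteIndex

variable {M : Type*} [CStarAlgebra M] {B : StarSubalgebra ℂ M} {E : M →ₗ[ℂ] M} {n : ℕ}
  {l : Fin n → M} {m : ℕ} {d : Fin m → M}

lemma isRightQB_commutantProj (hE : IsCondExp (B : Set M) E) (hl : IsRightQB E l)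
    (hcentral : IsCommutantCentral B E) (hd : IsCommutantQuasiBasis B E d) {g : M}
    (hg : g ∈ relCommutant B) (hsa : IsSelfAdjoint g) (hcomm : ∀ e ∈ relCommutant B, Commute g e)
    (hgz : g * g * (∑ j, star (d j) * d j) = 1) :
    IsRightQB (commutantProj E d) fun i => l i * g := by
  intro x
  have hterm : ∀ i, commutantProj E d (x * (l i * g)) * star (l i * g)
      = ∑ j, g * star (d j) * (E (g * d j * x * l i) * star (l i)) := fun i => by
    rw [commutantProj_apply, Finset.sum_mul]
    refine Finset.sum_congr rfl fun j _ => ?_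
    rw [show x * (l i * g) * d j = x * l i * (g * d j) by simp only [mul_assoc],
      ← hcentral _ (mul_mem hg (hd.mem j)), ← mul_assoc (g * d j), star_mul, hsa.star_eq,
      mul_assoc, ← mul_assoc (star (d j)), ← (hcomm _ (star_mem (hd.mem j))).eq, ← mul_assoc,
      (hE.commute_relCommutant _ (mul_mem hg (star_mem (hd.mem j)))).eq, mul_assoc]
  have hsum : ∀ j, ∑ i, g * star (d j) * (E (g * d j * x * l i) * star (l i))
      = g * g * (star (d j) * d j) * x := fun j => by
    rw [← Finset.mul_sum, ← hl (g * d j * x), mul_assoc g (star (d j)), mul_assoc g (d j),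
      ← mul_assoc (star (d j)), ← (hcomm _ (star_mem (hd.mem j))).eq]
    simp only [mul_assoc]
  simp only [hterm]
  rw [Finset.sum_comm]
  simp only [hsum]
  rw [← Finset.sum_mul, ← Finset.mul_sum, hgz, one_mul]

variable [PartialOrder M] [StarOrderedRing M]

namespace IsCommutantQuasiBasis

lemma commute_sum_star_mul_self (hd : IsCommutantQuasiBasis B E d) (hE : IsCondExp (B : Set M) E)
    (hcentral : IsCommutantCentral B E) {e : M} (he : e ∈ relCommutant B) :
    Commute e (∑ j, star (d j) * d j) := by
  have hleft : ∀ j, e * (star (d j) * d j)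
      = ∑ k, star (d k) * (d j * E (star (d j) * (d k * e))) := fun j => by
    rw [← mul_assoc, hd.expand _ (mul_mem he (star_mem (hd.mem j))), Finset.sum_mul]
    refine Finset.sum_congr rfl fun k _ => ?_
    rw [mul_assoc e, hcentral e he, mul_assoc (star (d j)),
      (hE.commute_relCommutant _ (star_mem (hd.mem k))).eq, mul_assoc,
      (hE.commute_relCommutant _ (hd.mem j)).eq]
  have hright : ∀ k, star (d k) * d k * e
      = ∑ j, star (d k) * (d j * E (star (d j) * (d k * e))) := fun k => by
    rw [← Finset.mul_sum, ← hd.expand_left hE (mul_mem (hd.mem k) he), mul_assoc]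
  rw [Commute, SemiconjBy, Finset.mul_sum, Finset.sum_mul,
    Finset.sum_congr rfl fun j _ => hleft j, Finset.sum_congr rfl fun k _ => hright k,
    Finset.sum_comm]

/-- Since `E (d j)` are the coordinates of `1`, the difference of the two sides is
`∑ j, star (d j - E (d j)) * (d j - E (d j))`. -/
lemma one_le_sum_star_mul_self (hd : IsCommutantQuasiBasis B E d)
    (hE : IsCondExp (B : Set M) E) : 1 ≤ ∑ j, star (d j) * d j := by
  have hone : ∑ j, star (d j) * E (d j) = 1 := by
    simpa [(hE.commute_relCommutant _ (star_mem (hd.mem _))).eq] using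
      (hd.expand 1 (one_mem _)).symm
  have hone_star : ∑ j, star (E (d j)) * d j = 1 := by
    simpa [star_sum] using congrArg star hone
  have hone_map : ∑ j, star (E (d j)) * E (d j) = 1 := by
    simpa [hE.map_mul_left (star_mem (hE.1 _)), hE.map_one] using congrArg E hone_star
  have hsquare : ∑ j, star (d j - E (d j)) * (d j - E (d j)) = ∑ j, star (d j) * d j - 1 := by
    simp only [star_sub, sub_mul, mul_sub, Finset.sum_sub_distrib, hone, hone_star, hone_map,
      sub_self, sub_zero]
  exact sub_nonneg.mp (hsquare ▸ Finset.sum_nonneg fun j _ => star_mul_self_nonneg _)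

/-- The witness is the inverse square root of `∑ j, star (d j) * d j`. -/
lemma exists_mul_self_mul_sum_eq_one (hd : IsCommutantQuasiBasis B E d)
    (hE : IsCondExp (B : Set M) E) (hcentral : IsCommutantCentral B E) :
    ∃ g ∈ relCommutant B, IsSelfAdjoint g ∧ (∀ e ∈ relCommutant B, Commute g e) ∧
      g * g * (∑ j, star (d j) * d j) = 1 := by
  set z : M := ∑ j, star (d j) * d j
  have hz_one : 1 ≤ z := hd.one_le_sum_star_mul_self hE
  have hz_nonneg : 0 ≤ z := zero_le_one.trans hz_one
  have hz_unit : IsUnit z := CStarAlgebra.isUnit_of_le 1 hz_one isStrictlyPositive_one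
  have hz_mem : z ∈ relCommutant B := sum_mem fun j _ => mul_mem (star_mem (hd.mem j)) (hd.mem j)
  have hcomm {x : M} (hx : Commute z x) : Commute (z ^ (-(1 / 2) : ℝ)) x := hx.cfc_nnreal _
  refine ⟨z ^ (-(1 / 2) : ℝ),
    mem_relCommutant.mpr fun b hb => hcomm (mem_relCommutant.mp hz_mem b hb),
    .of_nonneg CFC.rpow_nonneg,
    fun e he => hcomm (hd.commute_sum_star_mul_self hE hcentral he).symm, ?_⟩
  rw [← CFC.rpow_add hz_unit]
  nth_rw 2 [← CFC.rpow_one z hz_nonneg]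
  rw [← CFC.rpow_add hz_unit, ← CFC.rpow_zero z hz_nonneg]
  norm_num

end IsCommutantQuasiBasis

lemma exists_isCondExp_genC_of_isCommutantCentral [Algebra.IsCentral ℂ B]
    (hE : IsCondExp (B : Set M) E) (hl : IsRightQB E l) (hcentral : IsCommutantCentral B E) {r : ℝ}
    (hlr : indexMap l 1 = (r : ℂ) • (1 : M)) :
    ∃ F : M →ₗ[ℂ] M, IsCondExp (genC (B : Set M) : Set M) F ∧ (∀ x, E (F x) = E x) ∧
      ∃ (n : ℕ) (l : Fin n → M), IsRightQB F l := by
  obtain ⟨m, d, hd⟩ := exists_isCommutantQuasiBasis hE hl hcentral hlr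
  obtain ⟨g, hg, hsa, hcomm, hgz⟩ := hd.exists_mul_self_mul_sum_eq_one hE hcentral
  exact ⟨commutantProj E d, isCondExp_commutantProj hE hl hcentral hd, map_commutantProj hE hd,
    n, _, isRightQB_commutantProj hE hl hcentral hd hg hsa hcomm hgz⟩

end FiniteIndex

theorem genC_mem_IMS_general (B : StarSubalgebra ℂ A) [Algebra.IsCentral ℂ A]
    [Algebra.IsCentral ℂ B] (E₀ : A →ₗ[ℂ] A) (hE₀ : IsMinimalCondExp (B : Set A) E₀) :
    ∃ F : A →ₗ[ℂ] A,
      IsCondExp (genC (B : Set A) : Set A) F ∧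
      (∀ x : A, E₀ (F x) = E₀ x) ∧
      ∃ (n : ℕ) (l : Fin n → A), IsRightQB F l := by
  let _ : CStarAlgebra A := {}
  let _ := CStarAlgebra.spectralOrder A
  have _ := CStarAlgebra.spectralOrderedRing A
  obtain ⟨hE, r, n, l, hl, hindex, hmin⟩ := hE₀
  have hr : r ∈ lowerBounds (watataniIndices B) := by
    rintro s ⟨E, hE, m, k, hk, hs⟩
    exact hmin E hE m k hk s (by simpa [indexMap_apply] using hs)
  have hlr : indexMap l 1 = (r : ℂ) • (1 : A) := by simpa [indexMap_apply] using hindex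
  exact exists_isCondExp_genC_of_isCommutantCentral hE hl
    (isCommutantCentral_of_mem_lowerBounds hE hl hr hlr) hlr

/-- for an inclusion `B ⊆ A` of simple unital C*-algebras with a
finite-index conditional expectation and minimal conditional expectation `E₀`, the
subalgebra `C := C*(B ∪ C_A(B))` belongs to `IMS(B, A, E₀)`: there is a conditional
expectation `F : A → C` with `(E₀|_C) ∘ F = E₀`, and `F` has finite index. -/
theorem genC_mem_IMS
    (B : StarSubalgebra ℂ A) (hBclosed : IsClosed (B : Set A))
    (hAsimple : IsSimpleCStar (Set.univ : Set A))
    (hBsimple : IsSimpleCStar (B : Set A))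
    (E : A →ₗ[ℂ] A) (hE : IsCondExp (B : Set A) E)
    (nE : ℕ) (lE : Fin nE → A) (hlE : IsRightQB E lE)
    (E₀ : A →ₗ[ℂ] A) (hE₀ : IsMinimalCondExp (B : Set A) E₀) :
    ∃ F : A →ₗ[ℂ] A,
      IsCondExp (genC (B : Set A) : Set A) F ∧
      (∀ x : A, E₀ (F x) = E₀ x) ∧
      ∃ (n : ℕ) (l : Fin n → A), IsRightQB F l := by
  let _ : CStarAlgebra A := {}
  have := hAsimple.isCentral_univ
  have := hBsimple.isCentral hBclosed
  exact genC_mem_IMS_general B E₀ hE₀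

end RegularInclusion
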